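/- Let B be the integer 5×5 matrix with rows (1,0,−1,−1,−1), (0,0,0,1,0), (−1,1,0,0,1), (0,1,0,−1,0), (0,0,1,1,1), and let C be the 5×5 matrix whose only nonzero entry is −1 in position (5,1). For n ≥ 1 let A_n be the 5n×5n block upper bidiagonal matrix with n diagonal blocks equal to B and superdiagonal blocks equal to C (all other blocks zero). Then the polynomial Δ_n(t) = det(A_n − t·A_nᵀ) ∈ ℤ[t] satisfies Δ_n(0) = 1 and has degree exactly 5n, with the coefficient of t^{5n} equal to (−1)^n. -/

import Mathlib

/-- The 5×5 block `B` of the Seifert matrix. -/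
def Bmat : Matrix (Fin 5) (Fin 5) ℤ :=
  !![1, 0, -1, -1, -1;
     0, 0, 0, 1, 0;
     -1, 1, 0, 0, 1;
     0, 1, 0, -1, 0;
     0, 0, 1, 1, 1]

/-- The 5×5 block `C`, whose only nonzero entry is `-1` in position `(5,1)`. -/
def Cmat : Matrix (Fin 5) (Fin 5) ℤ :=
  !![0, 0, 0, 0, 0;
     0, 0, 0, 0, 0;
     0, 0, 0, 0, 0;
     0, 0, 0, 0, 0;
     -1, 0, 0, 0, 0]

/-- The `5n × 5n` block upper bidiagonal matrix with diagonal blocks `B` and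
superdiagonal blocks `C`. -/
def Amat (n : ℕ) : Matrix (Fin (5 * n)) (Fin (5 * n)) ℤ := fun i j =>
  if (i : ℕ) / 5 = (j : ℕ) / 5 then
    Bmat ⟨(i : ℕ) % 5, by omega⟩ ⟨(j : ℕ) % 5, by omega⟩
  else if (i : ℕ) / 5 + 1 = (j : ℕ) / 5 then
    Cmat ⟨(i : ℕ) % 5, by omega⟩ ⟨(j : ℕ) % 5, by omega⟩
  else 0

/-- The Alexander polynomial `Δ_n(t) = det(A_n - t A_nᵀ) ∈ ℤ[t]`. -/
noncomputable def DeltaPoly (n : ℕ) : Polynomial ℤ :=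
  Matrix.det ((Amat n).map Polynomial.C - (Polynomial.X : Polynomial ℤ) • ((Amat n).transpose.map Polynomial.C))

theorem Bmat_det : Bmat.det = 1 := by
  simp [Bmat, Matrix.det_succ_row_zero, Fin.sum_univ_succ, Fin.succAbove]

theorem Amat_det (n : ℕ) : (Amat n).det = 1 := by
  let e : Fin n × Fin 5 ≃ Fin (5 * n) :=
    finProdFinEquiv.trans (finCongr (Nat.mul_comm n 5))
  have he : ∀ p : Fin n × Fin 5, ((e p : Fin (5 * n)) : ℕ) = p.2 + 5 * p.1 := fun p => rfl
  have hd : ∀ p : Fin n × Fin 5, ((e p : Fin (5 * n)) : ℕ) / 5 = p.1 := fun p => by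
    rw [he]; omega
  have hm : ∀ p : Fin n × Fin 5, ((e p : Fin (5 * n)) : ℕ) % 5 = p.2 := fun p => by
    rw [he]; omega
  rw [← Matrix.det_submatrix_equiv_self e (Amat n)]
  have ht : ((Amat n).submatrix e e).BlockTriangular Prod.fst := by
    intro p q hpq
    have h : (q.1 : ℕ) < p.1 := hpq
    rw [Matrix.submatrix_apply, Amat, hd, hd, if_neg (by omega), if_neg (by omega)]
  rw [ht.det_fintype]
  refine Finset.prod_eq_one fun k _ => ?_
  let f : Fin 5 ≃ { a : Fin n × Fin 5 // a.1 = k } :=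
    { toFun := fun x => ⟨(k, x), rfl⟩
      invFun := fun a => a.1.2
      left_inv := fun _ => rfl
      right_inv := by rintro ⟨⟨a, b⟩, rfl⟩; rfl }
  rw [← Matrix.det_submatrix_equiv_self f, ← Bmat_det]
  congr 1
  ext i j
  change Amat n (e (k, i)) (e (k, j)) = _
  rw [Amat, if_pos (by rw [hd, hd])]
  congr 1 <;> exact Fin.ext (hm _)

theorem DeltaPoly_eq (n : ℕ) : DeltaPoly n =
    Matrix.det ((Polynomial.X : Polynomial ℤ) • (-(Amat n).transpose).map Polynomial.C
      + (Amat n).map Polynomial.C) := by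
  rw [DeltaPoly]
  congr 1
  ext1 i j
  simp
  ring

/-- `Δ_n(0) = 1`, and `Δ_n` has degree exactly `5n` with leading
coefficient `(-1)^n`. -/
theorem statement_19 (n : ℕ) (hn : 1 ≤ n) :
    (DeltaPoly n).eval 0 = 1 ∧ (DeltaPoly n).natDegree = 5 * n ∧
      (DeltaPoly n).coeff (5 * n) = (-1) ^ n := by
  have hc : (DeltaPoly n).coeff (5 * n) = (-1) ^ n := by
    have h := Polynomial.coeff_det_X_add_C_card (-(Amat n).transpose) (Amat n)
    rw [← DeltaPoly_eq, Fintype.card_fin, Matrix.det_neg, Matrix.det_transpose, Amat_det,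
      Fintype.card_fin, pow_mul, mul_one] at h
    rw [h]; norm_num
  refine ⟨?_, ?_, hc⟩
  · rw [← Polynomial.coeff_zero_eq_eval_zero, DeltaPoly_eq, Polynomial.coeff_det_X_add_C_zero,
      Amat_det]
  · apply le_antisymm
    · have h := Polynomial.natDegree_det_X_add_C_le (-(Amat n).transpose) (Amat n)
      rwa [← DeltaPoly_eq, Fintype.card_fin] at h
    · apply Polynomial.le_natDegree_of_ne_zero
      rw [hc]
      exact pow_ne_zero _ (by norm_num)
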